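/- arXiv:1103.4626 — 4 statements merged into one kernel-verified Lean document; each statement's English description precedes it below -/
import Mathlib

section
/- Let E be a finite-dimensional real vector space and q a symmetric bilinear form on E. Assume there is a linear hyperplane P of E on which q is positive definite. Let η ∈ E be a nonzero vector with q(η,η) = 0, and let W be a linear subspace of E such that q(η,w) = 0 for every w ∈ W and η ∉ W. Then q(w,w) > 0 for every nonzero w ∈ W. -/
/-!
Being isotropic, `η` lies outside `P`, hence `E = P ⊕ ℝη`. Write `w = p + c • η` with `p ∈ P`.
As `η` is orthogonal to both `w` and itself, `q w w = q p p`. Finally `p ≠ 0`, since otherwise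
`w` would be a nonzero multiple of `η`, forcing `η ∈ W`; so positivity on `P` gives the claim.
-/

/-- Abstract form of point v) of Proposition 2.8: if `q` is positive definite on a hyperplane,
`η` is a nonzero isotropic vector, and `W` is a subspace orthogonal to `η` not containing `η`,
then `q` is positive definite on `W`. -/
theorem stmt1 {E : Type*} [AddCommGroup E] [Module ℝ E] [FiniteDimensional ℝ E]
    (q : LinearMap.BilinForm ℝ E) (hsymm : ∀ x y, q x y = q y x)
    (P : Submodule ℝ E) (hP : Module.finrank ℝ P + 1 = Module.finrank ℝ E)
    (hpos : ∀ v ∈ P, v ≠ 0 → 0 < q v v)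
    (η : E) (hη0 : η ≠ 0) (hηiso : q η η = 0)
    (W : Submodule ℝ E) (horth : ∀ w ∈ W, q η w = 0) (hηW : η ∉ W) :
    ∀ w ∈ W, w ≠ 0 → 0 < q w w := by
  intro w hw hw0
  have hηP : η ∉ P := fun h => (hpos η h hη0).ne' hηiso
  have hquot : Module.finrank ℝ (E ⧸ P) = 1 := by
    have := P.finrank_quotient_add_finrank
    omega
  -- `η` spans the line `E ⧸ P`, so projecting `w` to `P` along `η` gives `w - c • η ∈ P`.
  obtain ⟨c, hc⟩ := (finrank_eq_one_iff_of_nonzero' (P.mkQ η) (by simpa using hηP)).1 hquot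
    (P.mkQ w)
  have hmem : w - c • η ∈ P := by
    rw [← Submodule.Quotient.mk_eq_zero, Submodule.Quotient.mk_sub, Submodule.Quotient.mk_smul,
      sub_eq_zero]
    exact hc.symm
  have hne : w - c • η ≠ 0 := by
    intro h
    have hwc : w = c • η := sub_eq_zero.1 h
    have hc0 : c ≠ 0 := by
      rintro rfl
      exact hw0 (by simpa using hwc)
    exact hηW ((W.smul_mem_iff hc0).1 (hwc ▸ hw))
  -- Since `η` is isotropic and orthogonal to `w`, the projection does not change `q w w`.
  have heq : q (w - c • η) (w - c • η) = q w w := by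
    simp [hηiso, horth w hw, hsymm w η]
  exact heq ▸ hpos _ hmem hne
end

section
/- Let M be a symmetric real p×p matrix such that M_{ij} ≤ 0 for all i ≠ j. Suppose xᵀMx > 0 for every nonzero vector x ∈ ℝ^p all of whose entries are nonnegative. Then M is positive definite, i.e. xᵀMx > 0 for every nonzero x ∈ ℝ^p. -/
open Matrix

/-- A symmetric real matrix with nonpositive off-diagonal entries which is positive on the
nonnegative orthant is positive definite. -/
theorem stmt2 {p : ℕ} (M : Matrix (Fin p) (Fin p) ℝ) (hsymm : M.IsSymm)
    (hoff : ∀ i j : Fin p, i ≠ j → M i j ≤ 0)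
    (hpos : ∀ x : Fin p → ℝ, x ≠ 0 → (∀ i, 0 ≤ x i) → 0 < x ⬝ᵥ M.mulVec x) :
    ∀ x : Fin p → ℝ, x ≠ 0 → 0 < x ⬝ᵥ M.mulVec x := by
  intro x hx
  -- Replacing `x` by `|x|` keeps the diagonal terms `M i i * x i ^ 2` and, as `M i j ≤ 0` for
  -- `i ≠ j`, can only decrease the off-diagonal ones; and `|x|` lies in the nonnegative orthant.
  refine (hpos (fun i => |x i|) ?_ fun i => abs_nonneg _).trans_le ?_
  · exact fun h => hx (funext fun i => abs_eq_zero.mp (congrFun h i))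
  · simp only [dotProduct, mulVec, Finset.mul_sum]
    refine Finset.sum_le_sum fun i _ => Finset.sum_le_sum fun j _ => ?_
    by_cases hij : i = j
    · subst hij
      exact le_of_eq (by linear_combination M i i * abs_mul_abs_self (x i))
    · have h : x i * x j ≤ |x i| * |x j| := (le_abs_self _).trans_eq (abs_mul _ _)
      nlinarith [mul_le_mul_of_nonpos_left h (hoff i j hij)]
end

section
/- Let E be a finite-dimensional real vector space and q a symmetric bilinear form on E which is positive definite on some linear hyperplane P of E. Let η ∈ E be nonzero with q(η,η) = 0, and let D₁,…,D_p ∈ E satisfy: q(D_i,D_j) < 0 for all i ≠ j, q(η,D_i) = 0 for all i, and no nonzero vector of the form Σᵢ λᵢDᵢ with all λᵢ ≥ 0 is a scalar multiple of η. Then q(w,w) > 0 for every nonzero w in the linear span of D₁,…,D_p. -/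
/-!
Since `η` is isotropic and `q` is positive definite on the hyperplane `P`, the space is the direct
sum of `P` and `ℝ η`. If `v = u + c η` with `u ∈ P` is orthogonal to `η`, then `q v v = q u u`, so
`q` is positive semidefinite on the orthogonal of `η`, with kernel exactly `ℝ η`
(`nonneg_and_mem_line_of_orthogonal`).

Now write `w = A - B`, where `A` and `B` collect the positive and negative parts of the
coefficients of `w` in the `D i`. The two sums have disjoint supports, so `q A B ≤ 0` and
`q w w ≥ q A A + q B B ≥ 0`. If `q w w ≤ 0`, then `A` and `B` are isotropic, hence multiples of
`η`, hence zero by the hypothesis on nonnegative combinations.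
-/

/-- On the orthogonal of `η` the form is positive semidefinite, and its isotropic vectors are the
multiples of `η`. -/
lemma nonneg_and_mem_line_of_orthogonal {E : Type*} [AddCommGroup E] [Module ℝ E]
    [FiniteDimensional ℝ E]
    (q : LinearMap.BilinForm ℝ E) (hsymm : ∀ x y, q x y = q y x)
    (P : Submodule ℝ E) (hP : Module.finrank ℝ P + 1 = Module.finrank ℝ E)
    (hpos : ∀ v ∈ P, v ≠ 0 → 0 < q v v)
    (η : E) (hη0 : η ≠ 0) (hηiso : q η η = 0) (v : E) (hv : q η v = 0) :
    0 ≤ q v v ∧ (q v v = 0 → ∃ c : ℝ, v = c • η) := by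
  have hηP : η ∉ P := fun h => (hpos η h hη0).ne' hηiso
  have hlt : P < P ⊔ Submodule.span ℝ {η} := by
    refine lt_of_le_of_ne le_sup_left fun h => hηP ?_
    rw [h]
    exact Submodule.mem_sup_right (Submodule.mem_span_singleton_self η)
  have htop : P ⊔ Submodule.span ℝ {η} = ⊤ := by
    apply Submodule.eq_top_of_finrank_eq
    have h1 := Submodule.finrank_lt_finrank_of_lt hlt
    have h2 := Submodule.finrank_le (P ⊔ Submodule.span ℝ {η})
    omega
  obtain ⟨u, hu, z, hz, rfl⟩ := Submodule.mem_sup.1 (htop ▸ Submodule.mem_top : v ∈ _)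
  obtain ⟨c, rfl⟩ := Submodule.mem_span_singleton.1 hz
  have hηu : q η u = 0 := by simpa [hηiso] using hv
  have hq : q (u + c • η) (u + c • η) = q u u := by
    simp [hηiso, hηu, hsymm u η]
  rw [hq]
  by_cases h0 : u = 0
  · subst h0
    exact ⟨by simp, fun _ => ⟨c, by simp⟩⟩
  · exact ⟨(hpos u hu h0).le, fun h => absurd h (hpos u hu h0).ne'⟩


/-- Abstract statement of Lemma 2.13: `q` positive definite on a hyperplane, `η` nonzero
isotropic, and vectors `D i` with negative mutual products, orthogonal to `η`, such that no
nonzero nonnegative combination of the `D i` is a multiple of `η`; then `q` is positive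
definite on the span of the `D i`. -/
theorem stmt3 {E : Type*} [AddCommGroup E] [Module ℝ E] [FiniteDimensional ℝ E]
    (q : LinearMap.BilinForm ℝ E) (hsymm : ∀ x y, q x y = q y x)
    (P : Submodule ℝ E) (hP : Module.finrank ℝ P + 1 = Module.finrank ℝ E)
    (hpos : ∀ v ∈ P, v ≠ 0 → 0 < q v v)
    (η : E) (hη0 : η ≠ 0) (hηiso : q η η = 0)
    (p : ℕ) (D : Fin p → E)
    (hneg : ∀ i j : Fin p, i ≠ j → q (D i) (D j) < 0)
    (horth : ∀ i, q η (D i) = 0)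
    (hcone : ∀ l : Fin p → ℝ, (∀ i, 0 ≤ l i) → (∑ i, l i • D i) ≠ 0 →
      ∀ c : ℝ, (∑ i, l i • D i) ≠ c • η) :
    ∀ w ∈ Submodule.span ℝ (Set.range D), w ≠ 0 → 0 < q w w := by
  intro w hw hw0
  obtain ⟨l, rfl⟩ := (Submodule.mem_span_range_iff_exists_fun ℝ).1 hw
  have hAη : ∀ m : Fin p → ℝ, q η (∑ i, m i • D i) = 0 := fun m => by
    simp [map_sum, horth]
  have key := fun m : Fin p → ℝ =>
    nonneg_and_mem_line_of_orthogonal q hsymm P hP hpos η hη0 hηiso _ (hAη m)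
  have hzero : ∀ m : Fin p → ℝ, (∀ i, 0 ≤ m i) →
      q (∑ i, m i • D i) (∑ i, m i • D i) = 0 → ∑ i, m i • D i = 0 := by
    intro m hm h
    by_contra hne
    obtain ⟨c, hc⟩ := (key m).2 h
    exact hcone m hm hne c hc
  have hsplit : ∑ i, l i • D i = ∑ i, (l i)⁺ • D i - ∑ i, (l i)⁻ • D i := by
    rw [← Finset.sum_sub_distrib]
    refine Finset.sum_congr rfl fun i _ => ?_
    rw [← sub_smul, posPart_sub_negPart]
  have hcross : q (∑ i, (l i)⁺ • D i) (∑ j, (l j)⁻ • D j) ≤ 0 := by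
    simp only [map_sum, LinearMap.sum_apply, map_smul, LinearMap.smul_apply, smul_eq_mul,
      Finset.mul_sum]
    refine Finset.sum_nonpos fun j _ => Finset.sum_nonpos fun i _ => ?_
    by_cases hij : i = j
    · subst hij
      -- the positive and negative parts of a real number have product zero
      rcases le_total 0 (l i) with h | h
      · simp [negPart_eq_zero.2 h]
      · simp [posPart_eq_zero.2 h]
    · exact mul_nonpos_of_nonneg_of_nonpos (negPart_nonneg _)
        (mul_nonpos_of_nonneg_of_nonpos (posPart_nonneg _) (hneg i j hij).le)
  have hA := (key fun i => (l i)⁺).1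
  have hB := (key fun i => (l i)⁻).1
  have hzA := hzero (fun i => (l i)⁺) fun i => posPart_nonneg _
  have hzB := hzero (fun i => (l i)⁻) fun i => negPart_nonneg _
  rw [hsplit] at hw0 ⊢
  generalize ∑ i, (l i)⁺ • D i = A at *
  generalize ∑ i, (l i)⁻ • D i = B at *
  have hexp : q (A - B) (A - B) = q A A - 2 * q A B + q B B := by
    simp only [map_sub, LinearMap.sub_apply, hsymm B A]
    ring
  by_contra hle
  exact hw0 (by rw [hzA (by linarith), hzB (by linarith), sub_zero])
end

section
/- Let φ, u : ℂ → ℝ be twice continuously differentiable functions which are both periodic with respect to the lattice ℤ + ℤi, i.e. g(z+1) = g(z) and g(z+i) = g(z) for all z ∈ ℂ, for g ∈ {φ, u}. Suppose that for all z ∈ ℂ, Δu(z) = e^{2(φ(z)+u(z))} − e^{2φ(z)}, where Δ denotes the Laplacian on ℂ ≅ ℝ². Then u is identically zero. -/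
/-!
Maximum principle. By double periodicity, `u` attains its supremum over `ℂ` at a point `z₀` of
the closed unit square (`exists_forall_le_of_periodic`). There every pure second derivative is
nonpositive, so `lap u z₀ ≤ 0` (`lap_nonpos_of_isMax`), while the equation says that `lap u z₀` has
the sign of `u z₀`; hence `u ≤ u z₀ ≤ 0`. The equation is invariant under
`(φ, u) ↦ (φ + u, -u)`, so the same argument gives `-u ≤ 0`.
-/

/-- The Laplacian of a function on `ℂ ≅ ℝ²`: `∂²φ/∂x² + ∂²φ/∂y²`, computed via iterated
real Fréchet derivatives in the directions `1` and `I`. -/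
noncomputable def lap (φ : ℂ → ℝ) (z : ℂ) : ℝ :=
  fderiv ℝ (fun w => fderiv ℝ φ w 1) z 1 +
    fderiv ℝ (fun w => fderiv ℝ φ w Complex.I) z Complex.I

open Filter Topology

/-- Necessary second-order condition: were the second derivative positive, the second derivative test
would make `x` a local minimum as well, so `g` would be constant near `x` and its second derivative
would vanish there. -/
lemma deriv_deriv_nonpos_of_isLocalMax {g : ℝ → ℝ} {x : ℝ} (hg : ContinuousAt g x)
    (hmax : IsLocalMax g x) : deriv (deriv g) x ≤ 0 := by
  by_contra! hpos
  have hmin : IsLocalMin g x := isLocalMin_of_deriv_deriv_pos hpos hmax.deriv_eq_zero hg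
  have hconst : g =ᶠ[𝓝 x] fun _ => g x := by
    filter_upwards [hmax, hmin] with y h1 h2
    exact le_antisymm h1 h2
  have hzero : deriv (deriv g) x = 0 := by
    rw [hconst.deriv.deriv_eq]
    simp
  exact hpos.ne' hzero

lemma fderiv_fderiv_nonpos_of_isMax {u : ℂ → ℝ} (hu : ContDiff ℝ 2 u) {z : ℂ}
    (hz : ∀ w, u w ≤ u z) (v : ℂ) : fderiv ℝ (fun w => fderiv ℝ u w v) z v ≤ 0 := by
  -- Restrict to the line `t ↦ z + t • v`, along which `fderiv · v` becomes `deriv`.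
  have hline : ∀ t : ℝ, HasDerivAt (fun t : ℝ => z + t • v) v t := fun t => by
    simpa using ((hasDerivAt_id t).smul_const v).const_add z
  have hderiv : ∀ f : ℂ → ℝ, Differentiable ℝ f →
      deriv (fun t : ℝ => f (z + t • v)) = fun t => fderiv ℝ f (z + t • v) v := fun f hf => by
    funext t
    exact ((hf _).hasFDerivAt.comp_hasDerivAt t (hline t)).deriv
  have hu' : Differentiable ℝ fun w => fderiv ℝ u w v :=
    ((hu.fderiv_right (m := 1) (by norm_num)).clm_apply contDiff_const).differentiable
      (by norm_num)
  have hcont : Continuous fun t : ℝ => u (z + t • v) :=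
    hu.continuous.comp (by fun_prop)
  have hmax : IsLocalMax (fun t : ℝ => u (z + t • v)) 0 :=
    Eventually.of_forall fun t => by simpa using hz (z + t • v)
  have key := deriv_deriv_nonpos_of_isLocalMax hcont.continuousAt hmax
  rw [hderiv u (hu.differentiable (by norm_num)), hderiv _ hu'] at key
  simpa using key

lemma lap_nonpos_of_isMax {u : ℂ → ℝ} (hu : ContDiff ℝ 2 u) {z : ℂ}
    (hz : ∀ w, u w ≤ u z) : lap u z ≤ 0 :=
  add_nonpos (fderiv_fderiv_nonpos_of_isMax hu hz 1)
    (fderiv_fderiv_nonpos_of_isMax hu hz Complex.I)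

lemma lap_neg (u : ℂ → ℝ) (z : ℂ) : lap (fun w => -u w) z = -lap u z := by
  simp only [lap, fderiv_fun_neg, neg_apply]
  ring

lemma exists_forall_le_of_periodic {u : ℂ → ℝ} (hu : Continuous u)
    (hu1 : ∀ z : ℂ, u (z + 1) = u z) (hui : ∀ z : ℂ, u (z + Complex.I) = u z) :
    ∃ z₀, ∀ z, u z ≤ u z₀ := by
  have hK : IsCompact (Set.Icc (0 : ℝ) 1 ×ℂ Set.Icc (0 : ℝ) 1) :=
    isCompact_Icc.reProdIm isCompact_Icc
  obtain ⟨z₀, -, h⟩ := hK.exists_isMaxOn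
    ⟨0, by simp [Complex.mem_reProdIm]⟩ hu.continuousOn
  refine ⟨z₀, fun z => ?_⟩
  -- Translate `z` into the unit square by the integer parts of its coordinates.
  have hshift : u (z - ⌊z.re⌋ * 1 - ⌊z.im⌋ * Complex.I) = u z := by
    rw [Function.Periodic.sub_int_mul_eq (f := u) hui,
      Function.Periodic.sub_int_mul_eq (f := u) hu1]
  rw [← hshift]
  apply h
  simp only [Complex.mem_reProdIm, Set.mem_Icc]
  refine ⟨⟨?_, ?_⟩, ?_, ?_⟩ <;> simp [Int.fract_nonneg, (Int.fract_lt_one _).le]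

/-- One-sided maximum principle, stated for an arbitrary potential `φ` so that it also applies to
`(φ + u, -u)`. -/
lemma nonpos_of_lap_eq {φ u : ℂ → ℝ} (hu : ContDiff ℝ 2 u)
    (hu1 : ∀ z : ℂ, u (z + 1) = u z) (hui : ∀ z : ℂ, u (z + Complex.I) = u z)
    (heq : ∀ z : ℂ, lap u z = Real.exp (2 * (φ z + u z)) - Real.exp (2 * φ z)) (z : ℂ) :
    u z ≤ 0 := by
  obtain ⟨z₀, hz₀⟩ := exists_forall_le_of_periodic hu.continuous hu1 hui
  have hlap := lap_nonpos_of_isMax hu hz₀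
  rw [heq, sub_nonpos, Real.exp_le_exp] at hlap
  linarith [hz₀ z]

/-- Compact model of the uniqueness in Théorème 3.1: a doubly periodic `C²` solution `u` of
`Δu = e^{2(φ+u)} − e^{2φ}`, with `φ` doubly periodic, vanishes identically. -/
theorem stmt6 (φ u : ℂ → ℝ) (hφ : ContDiff ℝ 2 φ) (hu : ContDiff ℝ 2 u)
    (hφ1 : ∀ z : ℂ, φ (z + 1) = φ z) (hφi : ∀ z : ℂ, φ (z + Complex.I) = φ z)
    (hu1 : ∀ z : ℂ, u (z + 1) = u z) (hui : ∀ z : ℂ, u (z + Complex.I) = u z)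
    (heq : ∀ z : ℂ, lap u z = Real.exp (2 * (φ z + u z)) - Real.exp (2 * φ z)) :
    ∀ z : ℂ, u z = 0 := by
  intro z
  refine le_antisymm (nonpos_of_lap_eq hu hu1 hui heq z) (neg_nonpos.mp ?_)
  refine nonpos_of_lap_eq (φ := fun w => φ w + u w) (u := fun w => -u w) hu.neg
    (fun w => by rw [hu1]) (fun w => by rw [hui]) (fun w => ?_) z
  rw [lap_neg, heq, add_neg_cancel_right, neg_sub]
end
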